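/- At every point λ of the Boyer–Lindquist phase-space chart U with r = r_s/2, p_t + (c/r_s)·p_φ = 0, and (p_θ, p_φ) ≠ (0,0), the 8×8 Hessian matrix of all second partial derivatives of P₀ (with respect to the eight variables t, r, θ, φ, p_t, p_r, p_θ, p_φ) has rank exactly 2. -/

import Mathlib

noncomputable section

/-- Partial derivative of a function on phase space ℝ⁸ with respect to the i-th variable.
Coordinates: x 0 = t, x 1 = r, x 2 = θ, x 3 = φ, x 4 = p_t, x 5 = p_r, x 6 = p_θ, x 7 = p_φ. -/
def pd (i : Fin 8) (f : (Fin 8 → ℝ) → ℝ) (x : Fin 8 → ℝ) : ℝ :=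
  deriv (fun s => f (Function.update x i s)) (x i)

/-- The 8×8 Hessian matrix of all second partial derivatives of f at x. -/
def hess (f : (Fin 8 → ℝ) → ℝ) (x : Fin 8 → ℝ) : Matrix (Fin 8) (Fin 8) ℝ :=
  Matrix.of fun i j => pd i (pd j f) x

/-- Σ = r² + (r_s²/4)·cos²θ -/
def Sig (rs r th : ℝ) : ℝ := r ^ 2 + rs ^ 2 / 4 * Real.cos th ^ 2

/-- Δ = (r − r_s/2)² -/
def Del (rs r : ℝ) : ℝ := (r - rs / 2) ^ 2

/-- D = r² + r_s²/4 + (r_s·r/Σ)·(r_s²/4)·sin²θ -/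
def Dfun (rs r th : ℝ) : ℝ :=
  r ^ 2 + rs ^ 2 / 4 + rs * r / Sig rs r th * (rs ^ 2 / 4) * Real.sin th ^ 2

/-- The Δ-rescaled principal symbol P₀ of P = Δ·□_g for extremal Kerr, as a function
on phase space ℝ⁸. -/
def P0v (rs c : ℝ) (x : Fin 8 → ℝ) : ℝ :=
  Sig rs (x 1) (x 2) * Real.sin (x 2) *
    (Dfun rs (x 1) (x 2) / c ^ 2 * (x 4) ^ 2
      + rs ^ 2 * x 1 / (c * Sig rs (x 1) (x 2)) * (x 4 * x 7)
      - Del rs (x 1) ^ 2 / Sig rs (x 1) (x 2) * (x 5) ^ 2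
      - Del rs (x 1) / Sig rs (x 1) (x 2) * (x 6) ^ 2
      - 1 / Real.sin (x 2) ^ 2 * (1 - rs * x 1 / Sig rs (x 1) (x 2)) * (x 7) ^ 2)

/-! For the extremal Kerr metric, Carter's separation of the Hamilton–Jacobi equation reads
`P₀ = sin θ · (A² − (r − r_s/2)² · K)`, where `A` pairs the momentum with the sum of the two
principal null directions (rescaled to be regular at the horizon) and `K` is a sum of squares.
On the double characteristic set both `A` and `r − r_s/2` vanish, so the Hessian there is
`2 sin θ · (dA² − K · dr²)`. The covectors `dA` and `dr` are linearly independent because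
`∂A/∂p_t ≠ 0`, and off the conormal bundle of the horizon `K ≠ 0`; hence the rank is `2`. -/

open Filter Topology
open scoped Matrix

section SecondDerivative

variable {𝕜 E F ι : Type*} [NontriviallyNormedField 𝕜] [NormedAddCommGroup E] [NormedSpace 𝕜 E]
  [NormedAddCommGroup F] [NormedSpace 𝕜 F] {x : E}

theorem eventually_differentiableAt_of_contDiffAt_two {f : E → F} (hf : ContDiffAt 𝕜 2 f x) :
    ∀ᶠ y in 𝓝 x, DifferentiableAt 𝕜 f y :=
  (hf.eventually (by simp)).mono fun _ hy => hy.differentiableAt two_ne_zero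

theorem differentiableAt_fderiv_of_contDiffAt_two {f : E → F} (hf : ContDiffAt 𝕜 2 f x) :
    DifferentiableAt 𝕜 (fderiv 𝕜 f) x :=
  (hf.fderiv_right (m := 1) (by norm_num)).differentiableAt one_ne_zero

theorem hasFDerivAt_fderiv_mul_sq_of_eq_zero {u A : E → 𝕜} (hu : ContDiffAt 𝕜 2 u x)
    (hA : ContDiffAt 𝕜 2 A x) (hA₀ : A x = 0) :
    HasFDerivAt (fderiv 𝕜 fun y => u y * A y ^ 2)
      ((fderiv 𝕜 A x).smulRight ((2 * u x) • fderiv 𝕜 A x)) x := by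
  have hu' := hu.differentiableAt two_ne_zero
  have hA' := hA.differentiableAt two_ne_zero
  -- Keeping one factor `A` outside means that at a zero of `A` only the derivative of that factor
  -- survives, so the second derivatives of `u` and `A` never enter.
  have fderiv_factor : (fderiv 𝕜 fun y => u y * A y ^ 2) =ᶠ[𝓝 x]
      fun y => A y • (A y • fderiv 𝕜 u y + (2 * u y) • fderiv 𝕜 A y) := by
    filter_upwards [eventually_differentiableAt_of_contDiffAt_two hu,
      eventually_differentiableAt_of_contDiffAt_two hA] with y huy hAy
    rw [fderiv_fun_mul huy (hAy.fun_pow 2), fderiv_fun_pow 2 hAy]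
    module
  have cofactor : DifferentiableAt 𝕜
      (fun y => A y • fderiv 𝕜 u y + (2 * u y) • fderiv 𝕜 A y) x :=
    (hA'.fun_smul (differentiableAt_fderiv_of_contDiffAt_two hu)).fun_add
      ((hu'.const_mul 2).fun_smul (differentiableAt_fderiv_of_contDiffAt_two hA))
  refine ((hA'.hasFDerivAt.fun_smul cofactor.hasFDerivAt).congr_of_eventuallyEq
    fderiv_factor).congr_fderiv ?_
  ext v w
  simp [hA₀]

theorem hasFDerivAt_fderiv_sum_mul_sq_of_eq_zero [Fintype ι] {u A : ι → E → 𝕜}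
    (hu : ∀ k, ContDiffAt 𝕜 2 (u k) x) (hA : ∀ k, ContDiffAt 𝕜 2 (A k) x)
    (hA₀ : ∀ k, A k x = 0) :
    HasFDerivAt (fderiv 𝕜 fun y => ∑ k, u k y * A k y ^ 2)
      (∑ k, (fderiv 𝕜 (A k) x).smulRight ((2 * u k x) • fderiv 𝕜 (A k) x)) x := by
  have terms_differentiable : ∀ᶠ y in 𝓝 x, ∀ k,
      DifferentiableAt 𝕜 (fun z => u k z * A k z ^ 2) y :=
    eventually_all.2 fun k =>
      eventually_differentiableAt_of_contDiffAt_two ((hu k).mul ((hA k).pow 2))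
  exact (HasFDerivAt.fun_sum fun k _ =>
    hasFDerivAt_fderiv_mul_sq_of_eq_zero (hu k) (hA k) (hA₀ k)).congr_of_eventuallyEq
      (terms_differentiable.mono fun y hy => fderiv_fun_sum fun k _ => hy k)

end SecondDerivative

theorem exists_mul_eq_one_of_linearIndependent_row {K m n : Type*} [Field K] [Finite m]
    [DecidableEq m] [Fintype n] {J : Matrix m n K} (hJ : LinearIndependent K J.row) :
    ∃ B : Matrix n m K, J * B = 1 := by
  have := Fintype.ofFinite m
  rw [← Matrix.mulVec_surjective_iff_exists_right_inverse, ← Matrix.coe_mulVecLin,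
    ← LinearMap.range_eq_top]
  exact Submodule.eq_top_of_finrank_eq
    (hJ.rank_matrix.trans (Module.finrank_fintype_fun_eq_card K).symm)

theorem rank_transpose_mul_mul_of_linearIndependent_row {K k l m n : Type*} [Field K]
    [Finite k] [Fintype l] [Fintype m] [Fintype n] {J : Matrix m k K} {L : Matrix n l K}
    (hJ : LinearIndependent K J.row) (hL : LinearIndependent K L.row) (M : Matrix m n K) :
    (Jᵀ * M * L).rank = M.rank := by
  classical
  have := Fintype.ofFinite k
  obtain ⟨B, hB⟩ := exists_mul_eq_one_of_linearIndependent_row hJ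
  obtain ⟨C, hC⟩ := exists_mul_eq_one_of_linearIndependent_row hL
  apply le_antisymm
  · exact (Matrix.rank_mul_le_left _ _).trans (Matrix.rank_mul_le_right _ _)
  · calc M.rank = ((J * B)ᵀ * M * (L * C)).rank := by simp [hB, hC]
      _ = (Bᵀ * (Jᵀ * M * L) * C).rank := by
        simp only [Matrix.transpose_mul, Matrix.mul_assoc]
      _ ≤ (Jᵀ * M * L).rank := (Matrix.rank_mul_le_left _ _).trans (Matrix.rank_mul_le_right _ _)

section Hessian

variable {f : (Fin 8 → ℝ) → ℝ} {x : Fin 8 → ℝ}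

theorem pd_eq_fderiv (i : Fin 8) (hf : DifferentiableAt ℝ f x) :
    pd i f x = fderiv ℝ f x (Pi.single i 1) := by
  have hf' : HasFDerivAt f (fderiv ℝ f x) (Function.update x i (x i)) := by
    rw [Function.update_eq_self]
    exact hf.hasFDerivAt
  exact (hf'.comp_hasDerivAt (x i) (hasDerivAt_update x i (x i))).deriv

theorem hess_apply_eq_fderiv_fderiv (hf : ContDiffAt ℝ 2 f x) (i j : Fin 8) :
    hess f x i j = fderiv ℝ (fderiv ℝ f) x (Pi.single i 1) (Pi.single j 1) := by
  have hf' := differentiableAt_fderiv_of_contDiffAt_two hf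
  have pd_near : pd j f =ᶠ[𝓝 x] fun y => fderiv ℝ f y (Pi.single j 1) :=
    (eventually_differentiableAt_of_contDiffAt_two hf).mono fun _ hy => pd_eq_fderiv j hy
  have pd_differentiable : DifferentiableAt ℝ (pd j f) x :=
    (hf'.clm_apply (differentiableAt_const _)).congr_of_eventuallyEq pd_near
  calc hess f x i j = fderiv ℝ (pd j f) x (Pi.single i 1) := pd_eq_fderiv i pd_differentiable
    _ = fderiv ℝ (fderiv ℝ f) x (Pi.single i 1) (Pi.single j 1) := by
      rw [pd_near.fderiv_eq, fderiv_clm_apply hf' (differentiableAt_const _)]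
      simp

variable {ι : Type*} [Fintype ι] {u A : ι → (Fin 8 → ℝ) → ℝ}

/-- The Jacobian matrix of a family of functions on phase space, with one row per function. -/
def jac (A : ι → (Fin 8 → ℝ) → ℝ) (x : Fin 8 → ℝ) : Matrix ι (Fin 8) ℝ :=
  Matrix.of fun k j => pd j (A k) x

theorem hess_eq_transpose_jac_mul_diagonal_mul_jac [DecidableEq ι]
    (hf : f =ᶠ[𝓝 x] fun y => ∑ k, u k y * A k y ^ 2)
    (hu : ∀ k, ContDiffAt ℝ 2 (u k) x) (hA : ∀ k, ContDiffAt ℝ 2 (A k) x)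
    (hA₀ : ∀ k, A k x = 0) :
    hess f x = (jac A x)ᵀ * Matrix.diagonal (fun k => 2 * u k x) * jac A x := by
  have hf_contDiff : ContDiffAt ℝ 2 f x :=
    (ContDiffAt.sum fun k _ => (hu k).mul ((hA k).pow 2)).congr_of_eventuallyEq hf
  ext i j
  rw [hess_apply_eq_fderiv_fderiv hf_contDiff, hf.fderiv.fderiv_eq,
    (hasFDerivAt_fderiv_sum_mul_sq_of_eq_zero hu hA hA₀).fderiv, Matrix.mul_apply]
  simp only [sum_apply, smul_apply, ContinuousLinearMap.smulRight_apply, smul_eq_mul,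
    Matrix.mul_diagonal, Matrix.transpose_apply, jac, Matrix.of_apply,
    pd_eq_fderiv _ ((hA _).differentiableAt two_ne_zero)]
  exact Finset.sum_congr rfl fun k _ => by ring

theorem rank_hess_eq_card_of_eventuallyEq_sum_mul_sq
    (hf : f =ᶠ[𝓝 x] fun y => ∑ k, u k y * A k y ^ 2)
    (hu : ∀ k, ContDiffAt ℝ 2 (u k) x) (hA : ∀ k, ContDiffAt ℝ 2 (A k) x)
    (hu₀ : ∀ k, u k x ≠ 0) (hA₀ : ∀ k, A k x = 0) (hJ : LinearIndependent ℝ (jac A x).row) :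
    (hess f x).rank = Fintype.card ι := by
  classical
  have hdet : (Matrix.diagonal fun k => 2 * u k x).det ≠ 0 := by
    rw [Matrix.det_diagonal]
    exact Finset.prod_ne_zero_iff.2 fun k _ => mul_ne_zero two_ne_zero (hu₀ k)
  rw [hess_eq_transpose_jac_mul_diagonal_mul_jac hf hu hA hA₀,
    rank_transpose_mul_mul_of_linearIndependent_row hJ hJ, Matrix.rank_of_det_ne_zero hdet]

end Hessian

section ExtremalKerr

/-- The pairing `A` of the momentum with the sum of the two principal null directions, rescaled
by `Δ / 2`: the vector field `((r² + a²) / c) ∂_t + a ∂_φ` with `a = r_s / 2`. -/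
def principalMomentum (rs c : ℝ) (x : Fin 8 → ℝ) : ℝ :=
  (x 1 ^ 2 + rs ^ 2 / 4) * x 4 / c + rs / 2 * x 7

/-- Carter's quadratic form `K` in the momenta, the sum of squares for which the separated symbol
reads `P₀ = sin θ · (A² − Δ · K)`. -/
def carterForm (rs c : ℝ) (x : Fin 8 → ℝ) : ℝ :=
  (rs / 2 * Real.sin (x 2) * x 4 / c + x 7 / Real.sin (x 2)) ^ 2 + x 6 ^ 2
    + Del rs (x 1) * x 5 ^ 2

variable {rs c : ℝ} {x : Fin 8 → ℝ}

theorem P0v_eq_sin_mul_sub (hc : c ≠ 0) (hr : x 1 ≠ 0) (hth : Real.sin (x 2) ≠ 0) :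
    P0v rs c x = Real.sin (x 2) *
      (principalMomentum rs c x ^ 2 - (x 1 - rs / 2) ^ 2 * carterForm rs c x) := by
  have hSig : Sig rs (x 1) (x 2) ≠ 0 := by
    unfold Sig
    positivity
  have hSig_sin : Sig rs (x 1) (x 2) = x 1 ^ 2 + rs ^ 2 / 4 * (1 - Real.sin (x 2) ^ 2) := by
    rw [Sig, Real.cos_sq']
  unfold P0v Dfun principalMomentum carterForm Del
  generalize Sig rs (x 1) (x 2) = S at *
  field_simp
  subst hSig_sin
  ring

theorem P0v_eventuallyEq_sum_mul_sq (hc : c ≠ 0) (hr : x 1 ≠ 0) (hth : Real.sin (x 2) ≠ 0) :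
    P0v rs c =ᶠ[𝓝 x] fun y => ∑ k : Fin 2,
      ![fun y => Real.sin (y 2), fun y => -(Real.sin (y 2) * carterForm rs c y)] k y *
        ![principalMomentum rs c, fun y => y 1 - rs / 2] k y ^ 2 := by
  have r_near : ∀ᶠ y : Fin 8 → ℝ in 𝓝 x, y 1 ≠ 0 :=
    (continuous_apply 1).continuousAt.eventually_ne hr
  have sin_near : ∀ᶠ y : Fin 8 → ℝ in 𝓝 x, Real.sin (y 2) ≠ 0 :=
    (Real.continuous_sin.comp (continuous_apply 2)).continuousAt.eventually_ne hth
  filter_upwards [r_near, sin_near] with y hry hthy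
  rw [P0v_eq_sin_mul_sub hc hry hthy, Fin.sum_univ_two]
  simp only [Matrix.cons_val_zero, Matrix.cons_val_one]
  ring

theorem contDiff_principalMomentum {n : WithTop ℕ∞} : ContDiff ℝ n (principalMomentum rs c) := by
  unfold principalMomentum
  fun_prop

theorem contDiffAt_carterForm {n : WithTop ℕ∞} (hth : Real.sin (x 2) ≠ 0) :
    ContDiffAt ℝ n (carterForm rs c) x := by
  unfold carterForm Del
  fun_prop (disch := assumption)

theorem principalMomentum_eq_zero (hc : c ≠ 0) (hhor : x 1 = rs / 2)
    (hchar : x 4 + c / rs * x 7 = 0) : principalMomentum rs c x = 0 := by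
  rw [principalMomentum, hhor, eq_neg_of_add_eq_zero_left hchar]
  field_simp
  ring

theorem carterForm_pos (hrs : rs ≠ 0) (hc : c ≠ 0) (hth : Real.sin (x 2) ≠ 0)
    (hchar : x 4 + c / rs * x 7 = 0) (hp : ¬(x 6 = 0 ∧ x 7 = 0)) : 0 < carterForm rs c x := by
  have angular_term : rs / 2 * Real.sin (x 2) * x 4 / c + x 7 / Real.sin (x 2)
      = (2 - Real.sin (x 2) ^ 2) / (2 * Real.sin (x 2)) * x 7 := by
    rw [eq_neg_of_add_eq_zero_left hchar]
    field_simp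
    ring
  have angular_factor : (2 - Real.sin (x 2) ^ 2) / (2 * Real.sin (x 2)) ≠ 0 :=
    div_ne_zero (by linarith [Real.sin_sq_le_one (x 2)]) (mul_ne_zero two_ne_zero hth)
  rw [carterForm, angular_term, Del]
  rcases not_and_or.1 hp with h6 | h7
  · positivity
  · have := mul_ne_zero angular_factor h7
    positivity

theorem pd_four_principalMomentum :
    pd 4 (principalMomentum rs c) x = (x 1 ^ 2 + rs ^ 2 / 4) / c := by
  simp [pd, principalMomentum]

theorem linearIndependent_jac_principalMomentum_row (hc : c ≠ 0) (hr : x 1 ≠ 0) :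
    LinearIndependent ℝ (jac ![principalMomentum rs c, fun y => y 1 - rs / 2] x).row := by
  have dA_pt : pd 4 (principalMomentum rs c) x ≠ 0 := by
    rw [pd_four_principalMomentum]
    positivity
  have dr_pt : pd 4 (fun y => y 1 - rs / 2) x = 0 := by simp [pd]
  have dr_r : pd 1 (fun y => y 1 - rs / 2) x = 1 := by simp [pd]
  have rows : (jac ![principalMomentum rs c, fun y => y 1 - rs / 2] x).row =
      ![fun j => pd j (principalMomentum rs c) x, fun j => pd j (fun y => y 1 - rs / 2) x] := by
    ext k j
    fin_cases k <;> rfl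
  rw [rows, LinearIndependent.pair_iff]
  intro a b hab
  have col (j : Fin 8) :
      a * pd j (principalMomentum rs c) x + b * pd j (fun y => y 1 - rs / 2) x = 0 :=
    congrFun hab j
  have ha : a = 0 := by simpa [dr_pt, dA_pt] using col 4
  have hb : b = 0 := by simpa [ha, dr_r] using col 1
  exact ⟨ha, hb⟩

end ExtremalKerr

/-- at every point of Σ₂ \ N*ℋ (i.e. r = r_s/2, p_t + (c/r_s)p_φ = 0 and
(p_θ,p_φ) ≠ (0,0)), the 8×8 Hessian of P₀ has rank exactly 2. -/
theorem hessian_rank_two_on_Sigma2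
    (rs c : ℝ) (hrs : 0 < rs) (hc : 0 < c)
    (x : Fin 8 → ℝ) (hr : 0 < x 1) (hth : Real.sin (x 2) ≠ 0)
    (hhor : x 1 = rs / 2) (hchar : x 4 + c / rs * x 7 = 0)
    (hp : ¬(x 6 = 0 ∧ x 7 = 0)) :
    (hess (P0v rs c) x).rank = 2 := by
  have smooth_sin : ContDiffAt ℝ 2 (fun y : Fin 8 → ℝ => Real.sin (y 2)) x := by fun_prop
  have smooth_r : ContDiffAt ℝ 2 (fun y : Fin 8 → ℝ => y 1 - rs / 2) x := by fun_prop
  have K_ne_zero := (carterForm_pos hrs.ne' hc.ne' hth hchar hp).ne'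
  exact rank_hess_eq_card_of_eventuallyEq_sum_mul_sq
    (P0v_eventuallyEq_sum_mul_sq hc.ne' hr.ne' hth)
    (Fin.forall_fin_two.2 ⟨smooth_sin, (smooth_sin.mul (contDiffAt_carterForm hth)).neg⟩)
    (Fin.forall_fin_two.2 ⟨contDiff_principalMomentum.contDiffAt, smooth_r⟩)
    (Fin.forall_fin_two.2 ⟨hth, neg_ne_zero.2 (mul_ne_zero hth K_ne_zero)⟩)
    (Fin.forall_fin_two.2 ⟨principalMomentum_eq_zero hc.ne' hhor hchar, sub_eq_zero.2 hhor⟩)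
    (linearIndependent_jac_principalMomentum_row hc.ne' hr.ne')
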